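/- (Theorem 2.2, necessity part) Let γ > 1 and let the initial data (τ₀,u₀) satisfy Assumption A. If there exists a point x* ∈ ℝ such that s_x(x*,0) < 0 or r_x(x*,0) < 0 (i.e., the initial data are compressive somewhere), then there is no global-in-time C¹ solution of the Cauchy problem for the p-system: every C¹ solution with this initial data exists only on a time interval [0,T) with T < ∞, and the gradients of (τ,u) blow up in finite time. -/

import Mathlib

open Real Set MeasureTheory Filter

/-- `η(τ) = (2√(K₁γ)/(γ−1)) τ^{−(γ−1)/2}`. -/
noncomputable def etaP (K₁ γ τv : ℝ) : ℝ :=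
  2 * Real.sqrt (K₁ * γ) / (γ - 1) * τv ^ (-(γ - 1) / 2)

/-- Lagrangian sound speed `c(τ) = √(K₁γ) τ^{−(γ+1)/2}`. -/
noncomputable def soundP (K₁ γ τv : ℝ) : ℝ :=
  Real.sqrt (K₁ * γ) * τv ^ (-(γ + 1) / 2)

/-- `K_τ = (2√(K₁γ)/(γ−1))^{2/(γ−1)}`. -/
noncomputable def KtauP (K₁ γ : ℝ) : ℝ :=
  (2 * Real.sqrt (K₁ * γ) / (γ - 1)) ^ (2 / (γ - 1))

/-- `K_c = √(K₁γ) K_τ^{−(γ+1)/2}`. -/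
noncomputable def KcP (K₁ γ : ℝ) : ℝ :=
  Real.sqrt (K₁ * γ) * KtauP K₁ γ ^ (-(γ + 1) / 2)

/-- A `Cᵏ` solution `(τ, u)` of the p-system with `γ`-law pressure `p = K₁ τ^{−γ}`
on `ℝ × I`:  `τ > 0`, both components are `Cᵏ`, and the equations
`τ_t − u_x = 0`, `u_t + (p(τ))_x = 0` hold pointwise. -/
def PSysSol (K₁ γ : ℝ) (I : Set ℝ) (k : ℕ) (τ u : ℝ → ℝ → ℝ) : Prop :=
  (∀ x t, t ∈ I → 0 < τ x t) ∧
  ContDiffOn ℝ k (fun p : ℝ × ℝ => τ p.1 p.2) (Set.univ ×ˢ I) ∧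
  ContDiffOn ℝ k (fun p : ℝ × ℝ => u p.1 p.2) (Set.univ ×ˢ I) ∧
  (∀ x : ℝ, ∀ t ∈ I, deriv (fun t' => τ x t') t - deriv (fun x' => u x' t) x = 0) ∧
  (∀ x : ℝ, ∀ t ∈ I, deriv (fun t' => u x t') t + deriv (fun x' => K₁ * τ x' t ^ (-γ)) x = 0)

/-- Assumption A: `τ₀, u₀` are `C¹` with `‖τ₀‖_{C¹} + ‖u₀‖_{C¹} ≤ M₁` and `τ₀ ≥ M₂ > 0`. -/
def AssumptionA (M₁ M₂ : ℝ) (τ₀ u₀ : ℝ → ℝ) : Prop :=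
  ContDiff ℝ 1 τ₀ ∧ ContDiff ℝ 1 u₀ ∧ 0 < M₁ ∧ 0 < M₂ ∧
  (∀ x, |τ₀ x| + |deriv τ₀ x| + |u₀ x| + |deriv u₀ x| ≤ M₁) ∧
  (∀ x, M₂ ≤ τ₀ x)

open scoped Topology NNReal

/-- closed upper half plane -/
def UHP : Set (ℝ × ℝ) := Set.univ ×ˢ Set.Ici (0:ℝ)

lemma mem_UHP {x t : ℝ} : (x, t) ∈ UHP ↔ 0 ≤ t := by simp [UHP]

lemma UHP_nhds {x t : ℝ} (ht : 0 < t) : UHP ∈ 𝓝 (x, t) :=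
  prod_mem_nhds univ_mem (Ici_mem_nhds ht)

lemma extract_C1 (f : ℝ → ℝ → ℝ) (hf : ContDiffOn ℝ 1 (fun p : ℝ × ℝ => f p.1 p.2) UHP) :
    ∃ fx : ℝ → ℝ → ℝ, ContinuousOn (fun p : ℝ × ℝ => fx p.1 p.2) UHP ∧
      (∀ x t, 0 ≤ t → HasDerivAt (fun x' => f x' t) (fx x t) x) ∧
      (∀ (X : ℝ → ℝ) (X' t : ℝ), 0 < t → HasDerivAt X X' t →
        HasDerivAt (fun t' => f (X t') t')
          (fx (X t) t * X' + deriv (fun t' => f (X t) t') t) t) := by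
  have hu : UniqueDiffOn ℝ UHP := uniqueDiffOn_univ.prod (uniqueDiffOn_Ici 0)
  set F : ℝ × ℝ → ℝ := fun p => f p.1 p.2 with hF
  refine ⟨fun x t => fderivWithin ℝ F UHP (x, t) (1, 0), ?_, ?_, ?_⟩
  · exact (hf.continuousOn_fderivWithin hu le_rfl).clm_apply continuousOn_const
  · intro x t ht
    have h1 : HasFDerivWithinAt F (fderivWithin ℝ F UHP (x, t)) UHP (x, t) :=
      ((hf.differentiableOn one_ne_zero) (x, t) (mem_UHP.2 ht)).hasFDerivWithinAt
    have h2 : HasDerivWithinAt (fun x' : ℝ => (x', t)) ((1:ℝ), (0:ℝ)) univ x :=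
      ((hasDerivAt_id x).prodMk (hasDerivAt_const x t)).hasDerivWithinAt
    have h3 := h1.comp_hasDerivWithinAt x h2 (fun y _ => mem_UHP.2 ht)
    exact hasDerivWithinAt_univ.1 h3
  · intro X X' t ht hX
    have h1 : HasFDerivAt F (fderivWithin ℝ F UHP (X t, t)) (X t, t) :=
      (((hf.differentiableOn one_ne_zero) (X t, t) (mem_UHP.2 ht.le)).hasFDerivWithinAt).hasFDerivAt
        (UHP_nhds ht)
    have h2 : HasDerivAt (fun t' : ℝ => (X t', t')) (X', (1:ℝ)) t :=
      hX.prodMk (hasDerivAt_id t)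
    have h3 : HasDerivAt (fun t' : ℝ => (X t, t')) ((0:ℝ), (1:ℝ)) t :=
      (hasDerivAt_const t (X t)).prodMk (hasDerivAt_id t)
    have h4 := HasFDerivAt.comp_hasDerivAt (f := fun t' : ℝ => (X t', t')) t h1 h2
    have h5 := h1.comp_hasDerivAt t h3
    have h6 : deriv (fun t' => f (X t) t') t = fderivWithin ℝ F UHP (X t, t) (0, 1) := h5.deriv
    rw [h6]
    have : (X', (1:ℝ)) = X' • ((1:ℝ), (0:ℝ)) + ((0:ℝ), (1:ℝ)) := by ext <;> simp
    rw [this, map_add, map_smul, smul_eq_mul, mul_comm] at h4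
    exact h4

lemma transport (c cx s w : ℝ → ℝ → ℝ) (X : ℝ → ℝ) (t₀ : ℝ) (ht₀ : 0 < t₀)
    (hX : ∀ᶠ t in 𝓝 t₀, HasDerivAt X (c (X t) t) t)
    (hw : ContinuousOn (fun p : ℝ × ℝ => w p.1 p.2) UHP)
    (hcx : ContinuousOn (fun p : ℝ × ℝ => cx p.1 p.2) UHP)
    (hcd : ∀ x t, 0 ≤ t → HasDerivAt (fun x' => c x' t) (cx x t) x)
    (hsd : ∀ x t, 0 ≤ t → HasDerivAt (fun x' => s x' t) (w x t) x)
    (hst : ∀ (X : ℝ → ℝ) (X' t : ℝ), 0 < t → HasDerivAt X X' t →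
        HasDerivAt (fun t' => s (X t') t') (w (X t) t * (X' - c (X t) t)) t) :
    HasDerivAt (fun t => w (X t) t) (-(cx (X t₀) t₀) * w (X t₀) t₀) t₀ := by
  have hXc : ContinuousAt X t₀ := hX.self_of_nhds.continuousAt
  have hpos : ∀ᶠ t in 𝓝 t₀, 0 < t := lt_mem_nhds ht₀
  have hcxA : ContinuousAt (fun p : ℝ × ℝ => cx p.1 p.2) (X t₀, t₀) :=
    hcx.continuousAt (UHP_nhds ht₀)
  have hwA : ContinuousAt (fun p : ℝ × ℝ => w p.1 p.2) (X t₀, t₀) :=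
    hw.continuousAt (UHP_nhds ht₀)
  have hpath : Tendsto (fun t => (X t, t)) (𝓝 t₀) (𝓝 (X t₀, t₀)) :=
    (hXc.prodMk continuousAt_id)
  have hfst : Tendsto (fun n : ℝ × ℝ => n.1) (𝓝[≠] (0:ℝ) ×ˢ 𝓝 t₀) (𝓝 0) :=
    (tendsto_fst).mono_right nhdsWithin_le_nhds
  have hXn : Tendsto (fun n : ℝ × ℝ => X n.2) (𝓝[≠] (0:ℝ) ×ˢ 𝓝 t₀) (𝓝 (X t₀)) :=
    hXc.tendsto.comp tendsto_snd
  have hpath2 : Tendsto (fun n : ℝ × ℝ => (X n.2 + n.1, n.2)) (𝓝[≠] (0:ℝ) ×ˢ 𝓝 t₀)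
      (𝓝 (X t₀, t₀)) := by
    refine Tendsto.prodMk_nhds ?_ tendsto_snd
    simpa using hXn.add hfst
  have hne : ∀ᶠ n : ℝ × ℝ in 𝓝[≠] (0:ℝ) ×ˢ 𝓝 t₀, n.1 ≠ 0 :=
    tendsto_fst.eventually eventually_mem_nhdsWithin
  have hslope : Tendsto (fun n : ℝ × ℝ => (c (X n.2 + n.1) n.2 - c (X n.2) n.2) / n.1)
      (𝓝[≠] (0:ℝ) ×ˢ 𝓝 t₀) (𝓝 (cx (X t₀) t₀)) := by
    rw [Metric.tendsto_nhds]
    intro ε hε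
    have h1 : ∀ᶠ p in 𝓝 (X t₀, t₀), dist (cx p.1 p.2) (cx (X t₀) t₀) < ε / 2 :=
      (Metric.tendsto_nhds.1 hcxA) (ε/2) (by positivity)
    obtain ⟨δ, hδ, hb⟩ := Metric.eventually_nhds_iff_ball.1 h1
    have e1 : ∀ᶠ n : ℝ × ℝ in 𝓝[≠] (0:ℝ) ×ˢ 𝓝 t₀, (X n.2 + n.1, n.2) ∈ Metric.ball (X t₀, t₀) δ :=
      hpath2 (Metric.ball_mem_nhds _ hδ)
    have e2 : ∀ᶠ n : ℝ × ℝ in 𝓝[≠] (0:ℝ) ×ˢ 𝓝 t₀, (X n.2, n.2) ∈ Metric.ball (X t₀, t₀) δ :=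
      (hpath.comp tendsto_snd) (Metric.ball_mem_nhds _ hδ)
    filter_upwards [e1, e2, hne, tendsto_snd.eventually hpos] with n h1 h2 h3 h4
    rw [← ball_prod_same] at h1 h2
    have h5 : ‖(c (X n.2 + n.1) n.2 - cx (X t₀) t₀ * (X n.2 + n.1))
        - (c (X n.2) n.2 - cx (X t₀) t₀ * (X n.2))‖ ≤ ε / 2 * ‖X n.2 + n.1 - X n.2‖ := by
      refine Convex.norm_image_sub_le_of_norm_hasDerivWithin_le
        (f := fun x => c x n.2 - cx (X t₀) t₀ * x) (f' := fun x => cx x n.2 - cx (X t₀) t₀ * 1)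
        (s := Metric.ball (X t₀) δ)
        ?_ ?_ (convex_ball _ _) h2.1 h1.1
      · intro x hx
        exact ((hcd x n.2 h4.le).sub ((hasDerivAt_id x).const_mul _)).hasDerivWithinAt
      · intro x hx
        have := hb (x, n.2) (by rw [← ball_prod_same]; exact ⟨hx, h1.2⟩)
        rw [mul_one]
        exact this.le
    rw [Real.dist_eq]
    have h6 : (c (X n.2 + n.1) n.2 - c (X n.2) n.2) / n.1 - cx (X t₀) t₀ =
      ((c (X n.2 + n.1) n.2 - cx (X t₀) t₀ * (X n.2 + n.1))
        - (c (X n.2) n.2 - cx (X t₀) t₀ * (X n.2))) / n.1 := by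
      field_simp; ring
    rw [h6, abs_div, div_lt_iff₀ (abs_pos.2 h3)]
    have h7 : 0 < |n.1| := abs_pos.2 h3
    rw [add_sub_cancel_left, Real.norm_eq_abs, Real.norm_eq_abs] at h5
    nlinarith
  refine hasDerivAt_of_tendstoUniformlyOnFilter (l := 𝓝[≠] (0:ℝ))
    (f := fun h t => (s (X t + h) t - s (X t) t) / h)
    (f' := fun h t => (w (X t + h) t * (c (X t) t - c (X t + h) t)) / h)
    (g' := fun t => -(cx (X t) t) * w (X t) t) ?_ ?_ ?_
  · have hA : Tendsto (fun n : ℝ × ℝ => (w (X n.2 + n.1) n.2 * (c (X n.2) n.2 - c (X n.2 + n.1) n.2)) / n.1)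
        (𝓝[≠] (0:ℝ) ×ˢ 𝓝 t₀) (𝓝 (-(cx (X t₀) t₀) * w (X t₀) t₀)) := by
      have := (hslope.neg).mul (hwA.tendsto.comp hpath2)
      refine this.congr fun n => ?_
      simp only [Function.comp]
      ring
    have hB : Tendsto (fun t => -(cx (X t) t) * w (X t) t) (𝓝 t₀)
        (𝓝 (-(cx (X t₀) t₀) * w (X t₀) t₀)) :=
      ((hcxA.tendsto.comp hpath).neg).mul (hwA.tendsto.comp hpath)
    rw [Metric.tendstoUniformlyOnFilter_iff]
    intro ε hε
    have hA' := (Metric.tendsto_nhds.1 hA) (ε/2) (by positivity)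
    have hB' := (Metric.tendsto_nhds.1 (hB.comp (tendsto_snd (f := 𝓝[≠] (0:ℝ))))) (ε/2) (by positivity)
    filter_upwards [hA', hB'] with n h1 h2
    have := dist_triangle_right (-(cx (X n.2) n.2) * w (X n.2) n.2)
      ((w (X n.2 + n.1) n.2 * (c (X n.2) n.2 - c (X n.2 + n.1) n.2)) / n.1)
      (-(cx (X t₀) t₀) * w (X t₀) t₀)
    simp only [Function.comp] at h2
    linarith
  · filter_upwards [tendsto_snd.eventually (hX.and hpos)] with n hn
    have h1 := hst (fun t => X t + n.1) _ n.2 hn.2 (hn.1.add_const n.1)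
    have h2 := hst X _ n.2 hn.2 hn.1
    have := (h1.sub h2).div_const n.1
    exact this.congr_deriv (by ring)
  · filter_upwards [hpos] with t ht
    have := (hsd (X t) t ht.le).tendsto_slope_zero
    refine this.congr fun h => ?_
    simp only [smul_eq_mul]
    ring

lemma exists_char (c cx : ℝ → ℝ → ℝ) (C T t₀ x₀ : ℝ) (ht₀ : t₀ ∈ Icc 0 T)
    (hc : ContinuousOn (fun p : ℝ × ℝ => c p.1 p.2) UHP)
    (hcx : ContinuousOn (fun p : ℝ × ℝ => cx p.1 p.2) UHP)
    (hcd : ∀ x t, 0 ≤ t → HasDerivAt (fun x' => c x' t) (cx x t) x)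
    (hC : ∀ x t, 0 ≤ t → |c x t| ≤ C) :
    ∃ X : ℝ → ℝ, X t₀ = x₀ ∧ ContinuousOn X (Icc 0 T) ∧
      ∀ t ∈ Ioo 0 T, HasDerivAt X (c (X t) t) t := by
  have hC0 : 0 ≤ C := (abs_nonneg _).trans (hC 0 0 le_rfl)
  have hT : 0 ≤ T := ht₀.1.trans ht₀.2
  obtain ⟨K, hK⟩ : ∃ K, ∀ p ∈ Metric.closedBall x₀ (C * T) ×ˢ Icc 0 T, ‖cx p.1 p.2‖ ≤ K :=
    ((isCompact_closedBall _ _).prod isCompact_Icc).exists_bound_of_continuousOn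
      (hcx.mono fun p hp => mem_UHP.2 hp.2.1)
  have hPL : IsPicardLindelof (fun t x => c x t) (⟨t₀, ht₀⟩ : Icc 0 T) x₀
      (⟨C * T, by positivity⟩ : ℝ≥0) 0 ⟨C, hC0⟩ K.toNNReal := by
    refine ⟨?_, ?_, ?_, ?_⟩
    · intro t ht
      refine Convex.lipschitzOnWith_of_nnnorm_hasDerivWithin_le (f' := fun x => cx x t)
        (convex_closedBall _ _)
        (fun x hx => (hcd x t ht.1).hasDerivWithinAt) ?_
      intro x hx
      have := hK (x, t) ⟨hx, ht⟩
      rw [← NNReal.coe_le_coe]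
      exact this.trans (Real.le_coe_toNNReal K)
    · intro x _
      exact hc.comp (by fun_prop) (fun t ht => mem_UHP.2 ht.1)
    · intro t ht x _
      exact hC x t ht.1
    · have : max (T - t₀) (t₀ - 0) ≤ T := max_le (by linarith [ht₀.1]) (by linarith [ht₀.2])
      simp only [NNReal.coe_zero, sub_zero] at *
      exact mul_le_mul_of_nonneg_left this hC0
  obtain ⟨X, h0, h1⟩ := hPL.exists_eq_forall_mem_Icc_hasDerivWithinAt₀
  refine ⟨X, h0, fun t ht => (h1 t ht).continuousWithinAt, fun t ht => ?_⟩
  exact (h1 t ⟨ht.1.le, ht.2.le⟩).hasDerivAt (Icc_mem_nhds ht.1 ht.2)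

lemma soundP_pos {K₁ γ y : ℝ} (hK : 0 < K₁) (hγ : 1 < γ) (hy : 0 < y) : 0 < soundP K₁ γ y := by
  unfold soundP
  have : 0 < K₁ * γ := by positivity
  positivity

lemma soundP_sq {K₁ γ y : ℝ} (hK : 0 < K₁) (hγ : 1 < γ) (hy : 0 < y) :
    soundP K₁ γ y ^ 2 = K₁ * γ * y ^ (-γ - 1) := by
  unfold soundP
  have : 0 ≤ K₁ * γ := by positivity
  rw [mul_pow, Real.sq_sqrt this, ← Real.rpow_natCast (y ^ _), ← Real.rpow_mul hy.le]
  congr 2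
  push_cast; ring

lemma hasDerivAt_etaP {K₁ γ y : ℝ} (hγ : 1 < γ) (hy : 0 < y) :
    HasDerivAt (etaP K₁ γ) (-soundP K₁ γ y) y := by
  unfold etaP soundP
  have h := ((Real.hasDerivAt_rpow_const (p := -(γ - 1) / 2) (Or.inl hy.ne')).const_mul
    (2 * Real.sqrt (K₁ * γ) / (γ - 1)))
  refine h.congr_deriv ?_
  have e : -(γ - 1) / 2 - 1 = -(γ + 1) / 2 := by ring
  rw [e]
  have : γ - 1 ≠ 0 := by linarith
  field_simp

lemma hasDerivAt_soundP {K₁ γ y : ℝ} (hy : 0 < y) :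
    HasDerivAt (soundP K₁ γ) (-(γ + 1) / 2 * soundP K₁ γ y / y) y := by
  unfold soundP
  have h := ((Real.hasDerivAt_rpow_const (p := -(γ + 1) / 2) (Or.inl hy.ne')).const_mul
    (Real.sqrt (K₁ * γ)))
  refine h.congr_deriv ?_
  rw [Real.rpow_sub_one hy.ne']
  field_simp

/-- regularity and equations, in usable form -/
structure PS (K₁ γ : ℝ) (τ u τx ux : ℝ → ℝ → ℝ) : Prop where
  hK : 0 < K₁
  hγ : 1 < γ
  pos : ∀ x t, 0 ≤ t → 0 < τ x t
  cτ : ContinuousOn (fun p : ℝ × ℝ => τ p.1 p.2) UHP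
  cu : ContinuousOn (fun p : ℝ × ℝ => u p.1 p.2) UHP
  cτx : ContinuousOn (fun p : ℝ × ℝ => τx p.1 p.2) UHP
  cux : ContinuousOn (fun p : ℝ × ℝ => ux p.1 p.2) UHP
  dτ : ∀ x t, 0 ≤ t → HasDerivAt (fun x' => τ x' t) (τx x t) x
  du : ∀ x t, 0 ≤ t → HasDerivAt (fun x' => u x' t) (ux x t) x
  pτ : ∀ (X : ℝ → ℝ) (X' t : ℝ), 0 < t → HasDerivAt X X' t →
        HasDerivAt (fun t' => τ (X t') t') (τx (X t) t * X' + ux (X t) t) t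
  pu : ∀ (X : ℝ → ℝ) (X' t : ℝ), 0 < t → HasDerivAt X X' t →
        HasDerivAt (fun t' => u (X t') t')
          (ux (X t) t * X' + soundP K₁ γ (τ (X t) t) ^ 2 * τx (X t) t) t

lemma PS.of_sol {K₁ γ : ℝ} (hK : 0 < K₁) (hγ : 1 < γ) {τ u : ℝ → ℝ → ℝ}
    (h : PSysSol K₁ γ (Set.Ici 0) 1 τ u) : ∃ τx ux, PS K₁ γ τ u τx ux := by
  obtain ⟨hpos, hτ, hu, e1, e2⟩ := h
  obtain ⟨τx, a1, a2, a3⟩ := extract_C1 τ (by exact_mod_cast hτ)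
  obtain ⟨ux, b1, b2, b3⟩ := extract_C1 u (by exact_mod_cast hu)
  refine ⟨τx, ux, hK, hγ, hpos, hτ.continuousOn, hu.continuousOn, a1, b1, a2, b2, ?_, ?_⟩
  · intro X X' t ht hX
    refine (a3 X X' t ht hX).congr_deriv ?_
    have := e1 (X t) t ht.le
    rw [(b2 (X t) t ht.le).deriv] at this
    linarith
  · intro X X' t ht hX
    refine (b3 X X' t ht hX).congr_deriv ?_
    have := e2 (X t) t ht.le
    have hp := hpos (X t) t ht.le
    rw [(((a2 (X t) t ht.le).rpow_const (p := -γ) (Or.inl hp.ne')).const_mul K₁).deriv] at this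
    rw [soundP_sq hK hγ hp]
    linarith

lemma PS.reflect {K₁ γ : ℝ} {τ u τx ux : ℝ → ℝ → ℝ} (h : PS K₁ γ τ u τx ux) :
    PS K₁ γ (fun x t => τ (-x) t) (fun x t => - u (-x) t) (fun x t => - τx (-x) t)
      (fun x t => ux (-x) t) := by
  have hm : MapsTo (fun p : ℝ × ℝ => (-p.1, p.2)) UHP UHP := fun p hp => mem_UHP.2 hp.2
  have hc : ContinuousOn (fun p : ℝ × ℝ => (-p.1, p.2)) UHP := by fun_prop
  refine ⟨h.hK, h.hγ, fun x t ht => h.pos _ t ht, h.cτ.comp hc hm, (h.cu.comp hc hm).neg,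
    (h.cτx.comp hc hm).neg, h.cux.comp hc hm, ?_, ?_, ?_, ?_⟩
  · intro x t ht
    have := (h.dτ (-x) t ht).scomp x (hasDerivAt_neg x)
    exact this.congr_deriv (by simp)
  · intro x t ht
    have := ((h.du (-x) t ht).scomp x (hasDerivAt_neg x)).neg
    exact this.congr_deriv (by simp)
  · intro X X' t ht hX
    exact (h.pτ _ _ t ht hX.neg).congr_deriv (by simp only [Pi.neg_apply]; ring)
  · intro X X' t ht hX
    exact (h.pu _ _ t ht hX.neg).neg.congr_deriv (by simp only [Pi.neg_apply]; ring)

section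
variable {K₁ γ : ℝ} {τ u τx ux : ℝ → ℝ → ℝ}

lemma PS.cc (h : PS K₁ γ τ u τx ux) :
    ContinuousOn (fun p : ℝ × ℝ => soundP K₁ γ (τ p.1 p.2)) UHP := by
  intro p hp
  exact ContinuousAt.comp_continuousWithinAt (g := soundP K₁ γ) (f := fun p : ℝ × ℝ => τ p.1 p.2)
    (hasDerivAt_soundP (h.pos p.1 p.2 (mem_UHP.1 hp))).continuousAt (h.cτ p hp)

lemma PS.cη (h : PS K₁ γ τ u τx ux) :
    ContinuousOn (fun p : ℝ × ℝ => etaP K₁ γ (τ p.1 p.2)) UHP := by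
  intro p hp
  exact ContinuousAt.comp_continuousWithinAt (g := etaP K₁ γ) (f := fun p : ℝ × ℝ => τ p.1 p.2)
    (hasDerivAt_etaP h.hγ (h.pos p.1 p.2 (mem_UHP.1 hp))).continuousAt (h.cτ p hp)

lemma PS.dη (h : PS K₁ γ τ u τx ux) (x t : ℝ) (ht : 0 ≤ t) :
    HasDerivAt (fun x' => etaP K₁ γ (τ x' t)) (-soundP K₁ γ (τ x t) * τx x t) x :=
  HasDerivAt.comp (h₂ := etaP K₁ γ) x (hasDerivAt_etaP h.hγ (h.pos x t ht)) (h.dτ x t ht)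

lemma PS.dc (h : PS K₁ γ τ u τx ux) (x t : ℝ) (ht : 0 ≤ t) :
    HasDerivAt (fun x' => soundP K₁ γ (τ x' t))
      (-(γ + 1) / 2 * soundP K₁ γ (τ x t) / τ x t * τx x t) x :=
  HasDerivAt.comp (h₂ := soundP K₁ γ) x (hasDerivAt_soundP (h.pos x t ht)) (h.dτ x t ht)

lemma PS.ccx (h : PS K₁ γ τ u τx ux) :
    ContinuousOn (fun p : ℝ × ℝ => -(γ + 1) / 2 * soundP K₁ γ (τ p.1 p.2) / τ p.1 p.2
      * τx p.1 p.2) UHP :=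
  ((continuousOn_const.mul h.cc).div h.cτ (fun _ hp => (h.pos _ _ (mem_UHP.1 hp)).ne')).mul h.cτx

lemma PS.pη (h : PS K₁ γ τ u τx ux) (X : ℝ → ℝ) (X' t : ℝ) (ht : 0 < t) (hX : HasDerivAt X X' t) :
    HasDerivAt (fun t' => etaP K₁ γ (τ (X t') t'))
      (-soundP K₁ γ (τ (X t) t) * (τx (X t) t * X' + ux (X t) t)) t :=
  HasDerivAt.comp (h₂ := etaP K₁ γ) t (hasDerivAt_etaP h.hγ (h.pos (X t) t ht.le)) (h.pτ X X' t ht hX)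

lemma PS.ps (h : PS K₁ γ τ u τx ux) (X : ℝ → ℝ) (X' t : ℝ) (ht : 0 < t) (hX : HasDerivAt X X' t) :
    HasDerivAt (fun t' => u (X t') t' + etaP K₁ γ (τ (X t') t'))
      ((ux (X t) t - soundP K₁ γ (τ (X t) t) * τx (X t) t) * (X' - soundP K₁ γ (τ (X t) t))) t :=
  ((h.pu X X' t ht hX).add (h.pη X X' t ht hX)).congr_deriv (by ring)

lemma neg_deriv_contra (g : ℝ → ℝ) (d t : ℝ) (ht : 0 < t) (hg : 0 ≤ g t) (hd : HasDerivAt g d t)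
    (hneg : ∀ t' ∈ Ico 0 t, g t' < 0) : 0 ≤ d := by
  have h1 : Tendsto (slope g t) (𝓝[<] t) (𝓝 d) :=
    (hasDerivAt_iff_tendsto_slope.1 hd).mono_left (nhdsWithin_mono _ fun x hx => ne_of_lt hx)
  refine ge_of_tendsto h1 ?_
  filter_upwards [Ico_mem_nhdsLT ht] with y hy
  rw [slope_def_field]
  apply div_nonneg_of_nonpos
  · linarith [hneg y hy]
  · linarith [hy.2]

lemma PS.bound (h : PS K₁ γ τ u τx ux) (S C : ℝ) (hC0 : 0 ≤ C)
    (hC : ∀ y, 0 < y → etaP K₁ γ y ≤ S + 1 → soundP K₁ γ y ≤ C)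
    (hs : ∀ x, u x 0 + etaP K₁ γ (τ x 0) ≤ S) (hr : ∀ x, -u x 0 + etaP K₁ γ (τ x 0) ≤ S)
    (x₀ T : ℝ) (hT : 0 ≤ T) :
    etaP K₁ γ (τ x₀ T) ≤ S + 1 := by
  by_contra hcon
  push Not at hcon
  set ε : ℝ := 1 / (1 + T) with hε
  have hεpos : 0 < ε := by positivity
  have hεT : ε * (1 + T) = 1 := by rw [hε]; field_simp
  set G : ℝ × ℝ → ℝ := fun p => max (u p.1 p.2 + etaP K₁ γ (τ p.1 p.2))
    (-u p.1 p.2 + etaP K₁ γ (τ p.1 p.2)) - S - ε * (1 + p.2) with hG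
  have hGc : ContinuousOn G UHP := by
    refine ContinuousOn.sub (ContinuousOn.sub ?_ continuousOn_const) (by fun_prop)
    exact ContinuousOn.sup (h.cu.add h.cη) (h.cu.neg.add h.cη)
  set Kc : Set (ℝ × ℝ) := {p | 0 ≤ p.2 ∧ p.2 ≤ T ∧ |p.1 - x₀| ≤ C * (T - p.2)} with hKc
  have hKU : Kc ⊆ UHP := fun p hp => mem_UHP.2 hp.1
  have hKcomp : IsCompact Kc := by
    refine IsCompact.of_isClosed_subset
      ((isCompact_closedBall x₀ (C * T)).prod (isCompact_Icc (a := (0:ℝ)) (b := T))) ?_ ?_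
    · have i1 : IsClosed {p : ℝ × ℝ | 0 ≤ p.2} := isClosed_le (by fun_prop) (by fun_prop)
      have i2 : IsClosed {p : ℝ × ℝ | p.2 ≤ T} := isClosed_le (by fun_prop) (by fun_prop)
      have i3 : IsClosed {p : ℝ × ℝ | |p.1 - x₀| ≤ C * (T - p.2)} :=
        isClosed_le (by fun_prop) (by fun_prop)
      exact i1.inter (i2.inter i3)
    · rintro p ⟨h1, h2, h3⟩
      refine ⟨?_, h1, h2⟩
      rw [Metric.mem_closedBall, Real.dist_eq]
      nlinarith
  have hZ : IsCompact (Kc ∩ G ⁻¹' (Ici 0)) :=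
    hKcomp.of_isClosed_subset
      ((hGc.mono hKU).preimage_isClosed_of_isClosed hKcomp.isClosed isClosed_Ici) inter_subset_left
  have hmem0 : (x₀, T) ∈ Kc ∩ G ⁻¹' (Ici 0) := by
    refine ⟨⟨hT, le_rfl, by simp⟩, ?_⟩
    simp only [mem_preimage, mem_Ici, hG, hεT]
    rcases le_total 0 (u x₀ T) with hu | hu
    · linarith [le_max_left (u x₀ T + etaP K₁ γ (τ x₀ T)) (-u x₀ T + etaP K₁ γ (τ x₀ T))]
    · linarith [le_max_right (u x₀ T + etaP K₁ γ (τ x₀ T)) (-u x₀ T + etaP K₁ γ (τ x₀ T))]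
  obtain ⟨⟨x, t⟩, ⟨⟨ht0, htT, hx⟩, hGp⟩, hmin⟩ :=
    hZ.exists_isMinOn ⟨_, hmem0⟩ (continuous_snd.continuousOn)
  simp only at ht0 htT hx
  simp only [mem_preimage, mem_Ici] at hGp
  have hlt : ∀ x' t', 0 ≤ t' → t' < t → |x' - x₀| ≤ C * (T - t') → G (x', t') < 0 := by
    intro x' t' h1 h2 h3
    by_contra hc
    have := hmin (show (x', t') ∈ Kc ∩ G ⁻¹' (Ici 0) from ⟨⟨h1, by linarith, h3⟩, not_lt.1 hc⟩)
    simp only [mem_ofPred_eq] at this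
    linarith
  have htpos : 0 < t := by
    rcases ht0.lt_or_eq with h1 | h1
    · exact h1
    · exfalso
      subst h1
      simp only [hG] at hGp
      have := max_le (hs x) (hr x)
      linarith
  have hGle : G (x, t) ≤ 0 := by
    have h1 : ContinuousAt G (x, t) := hGc.continuousAt (UHP_nhds htpos)
    have h2 : Tendsto (fun t' => G (x, t')) (𝓝[<] t) (𝓝 (G (x, t))) := by
      refine (h1.tendsto.comp ?_).mono_left nhdsWithin_le_nhds
      exact (Continuous.prodMk_right x).tendsto t
    refine le_of_tendsto h2 ?_
    filter_upwards [Ico_mem_nhdsLT htpos] with t' ht'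
    refine (hlt x t' ht'.1 ht'.2 ?_).le
    have := ht'.2
    nlinarith
  have hmax : max (u x t + etaP K₁ γ (τ x t)) (-u x t + etaP K₁ γ (τ x t)) = S + ε * (1 + t) := by
    simp only [hG] at hGle hGp
    linarith
  have hεt : ε * (1 + t) ≤ 1 := by nlinarith
  have hcC : soundP K₁ γ (τ x t) ≤ C := by
    refine hC _ (h.pos x t ht0) ?_
    linarith [le_max_left (u x t + etaP K₁ γ (τ x t)) (-u x t + etaP K₁ γ (τ x t)),
      le_max_right (u x t + etaP K₁ γ (τ x t)) (-u x t + etaP K₁ γ (τ x t))]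
  have hcpos := soundP_pos h.hK h.hγ (h.pos x t ht0)
  set c := soundP K₁ γ (τ x t) with hcdef
  have hεd : HasDerivAt (fun t' : ℝ => S + ε * (1 + t')) ε t := by
    have := (((hasDerivAt_id t).const_add 1).const_mul ε).const_add S
    exact this.congr_deriv (by simp)
  have hXd : ∀ d : ℝ, HasDerivAt (fun t' : ℝ => x + d * (t' - t)) d t := by
    intro d
    have := (((hasDerivAt_id t).sub_const t).const_mul d).const_add x
    exact this.congr_deriv (by simp)
  have hXm : ∀ d : ℝ, |d| ≤ C → ∀ t' ∈ Ico 0 t, |x + d * (t' - t) - x₀| ≤ C * (T - t') := by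
    intro d hd t' ht'
    have h1 : x + d * (t' - t) - x₀ = (x - x₀) + d * (t' - t) := by ring
    rw [h1]
    refine (abs_add_le _ _).trans ?_
    rw [abs_mul, abs_of_neg (by linarith [ht'.2] : t' - t < 0)]
    nlinarith [ht'.2]
  rcases max_choice (u x t + etaP K₁ γ (τ x t)) (-u x t + etaP K₁ γ (τ x t)) with hm | hm
  · have hp := (h.ps _ c t htpos (hXd c)).sub hεd
    have := neg_deriv_contra _ _ t htpos ?_ hp ?_
    · simp only [sub_self, mul_zero, add_zero, ← hcdef] at this
      linarith
    · simp only [Pi.sub_apply, sub_self, mul_zero, add_zero]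
      rw [hm] at hmax; linarith
    · intro t' ht'
      have h1 := hlt _ t' ht'.1 ht'.2 (hXm c (by rw [abs_of_pos hcpos]; exact hcC) t' ht')
      simp only [hG] at h1
      simp only [Pi.sub_apply]
      have := le_max_left (u (x + c * (t' - t)) t' + etaP K₁ γ (τ (x + c * (t' - t)) t'))
        (-u (x + c * (t' - t)) t' + etaP K₁ γ (τ (x + c * (t' - t)) t'))
      linarith
  · have hp := (((h.pu _ (-c) t htpos (hXd (-c))).neg.add (h.pη _ (-c) t htpos (hXd (-c))))).sub hεd
    have := neg_deriv_contra _ _ t htpos ?_ hp ?_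
    · simp only [sub_self, mul_zero, add_zero, ← hcdef] at this
      nlinarith
    · simp only [Pi.sub_apply, Pi.add_apply, Pi.neg_apply, sub_self, mul_zero, add_zero]
      rw [hm] at hmax; linarith
    · intro t' ht'
      have h1 := hlt _ t' ht'.1 ht'.2 (hXm (-c) (by rw [abs_neg, abs_of_pos hcpos]; exact hcC) t' ht')
      simp only [hG] at h1
      simp only [Pi.sub_apply, Pi.add_apply, Pi.neg_apply]
      have := le_max_right (u (x + -c * (t' - t)) t' + etaP K₁ γ (τ (x + -c * (t' - t)) t'))
        (-u (x + -c * (t' - t)) t' + etaP K₁ γ (τ (x + -c * (t' - t)) t'))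
      linarith
end

lemma etaP_anti {K₁ γ y z : ℝ} (hγ : 1 < γ) (hy : 0 < y) (hyz : y ≤ z) :
    etaP K₁ γ z ≤ etaP K₁ γ y := by
  unfold etaP
  have h1 : z ^ (-(γ - 1) / 2) ≤ y ^ (-(γ - 1) / 2) :=
    Real.rpow_le_rpow_of_nonpos hy hyz (by linarith)
  have h2 : 0 ≤ 2 * Real.sqrt (K₁ * γ) / (γ - 1) :=
    div_nonneg (by positivity) (by linarith)
  exact mul_le_mul_of_nonneg_left h1 h2

lemma soundP_anti {K₁ γ y z : ℝ} (hγ : 1 < γ) (hy : 0 < y) (hyz : y ≤ z) :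
    soundP K₁ γ z ≤ soundP K₁ γ y := by
  unfold soundP
  have h1 : z ^ (-(γ + 1) / 2) ≤ y ^ (-(γ + 1) / 2) :=
    Real.rpow_le_rpow_of_nonpos hy hyz (by linarith)
  exact mul_le_mul_of_nonneg_left h1 (by positivity)

lemma etaP_lower {K₁ γ : ℝ} (hK : 0 < K₁) (hγ : 1 < γ) (B : ℝ) :
    ∃ m, 0 < m ∧ ∀ y, 0 < y → etaP K₁ γ y ≤ B → m ≤ y := by
  have hk : 0 < 2 * Real.sqrt (K₁ * γ) / (γ - 1) := by
    have : 0 < K₁ * γ := by positivity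
    have : 0 < γ - 1 := by linarith
    positivity
  set κ := 2 * Real.sqrt (K₁ * γ) / (γ - 1) with hκ
  have hB : 0 < max B 1 := by positivity
  refine ⟨(max B 1 / κ) ^ (-2 / (γ - 1)), by positivity, ?_⟩
  intro y hy h
  by_contra hc
  push Not at hc
  have h1 : ((max B 1 / κ) ^ (-2 / (γ - 1))) ^ (-(γ - 1) / 2) < y ^ (-(γ - 1) / 2) :=
    Real.rpow_lt_rpow_of_neg hy hc (by linarith)
  have h2 : -2 / (γ - 1) * (-(γ - 1) / 2) = 1 := by
    have : γ - 1 ≠ 0 := by linarith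
    field_simp
  rw [← Real.rpow_mul (by positivity), h2, Real.rpow_one, div_lt_iff₀ hk] at h1
  unfold etaP at h
  rw [← hκ] at h
  linarith [le_max_left B 1]

lemma sqrt_soundP {K₁ γ y : ℝ} (hy : 0 < y) :
    Real.sqrt (soundP K₁ γ y) = Real.sqrt (Real.sqrt (K₁ * γ)) * y ^ (-(γ + 1) / 4) := by
  unfold soundP
  rw [Real.sqrt_mul (Real.sqrt_nonneg _), Real.sqrt_eq_rpow (y ^ _), ← Real.rpow_mul hy.le]
  congr 2
  ring

/-- weighted gradient -/
noncomputable def yP (K₁ γ : ℝ) (τ τx ux : ℝ → ℝ → ℝ) (x t : ℝ) : ℝ :=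
  Real.sqrt (soundP K₁ γ (τ x t)) * (ux x t - soundP K₁ γ (τ x t) * τx x t)

section
variable {K₁ γ : ℝ} {τ u τx ux : ℝ → ℝ → ℝ}

lemma PS.y_cont (h : PS K₁ γ τ u τx ux) :
    ContinuousOn (fun p : ℝ × ℝ => yP K₁ γ τ τx ux p.1 p.2) UHP :=
  h.cc.sqrt.mul (h.cux.sub (h.cc.mul h.cτx))

lemma PS.y_deriv (h : PS K₁ γ τ u τx ux) (X : ℝ → ℝ) (t₀ : ℝ) (ht₀ : 0 < t₀)
    (hX : ∀ᶠ t in 𝓝 t₀, HasDerivAt X (soundP K₁ γ (τ (X t) t)) t) :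
    HasDerivAt (fun t => yP K₁ γ τ τx ux (X t) t)
      (-((γ + 1) / (4 * (τ (X t₀) t₀ * Real.sqrt (soundP K₁ γ (τ (X t₀) t₀))))
        * yP K₁ γ τ τx ux (X t₀) t₀ ^ 2)) t₀ := by
  have h1 := transport (fun x t => soundP K₁ γ (τ x t)) _
    (fun x t => u x t + etaP K₁ γ (τ x t)) (fun x t => ux x t - soundP K₁ γ (τ x t) * τx x t)
    X t₀ ht₀ hX (h.cux.sub (h.cc.mul h.cτx)) h.ccx h.dc
    (fun x t ht => ((h.du x t ht).add (h.dη x t ht)).congr_deriv (by ring))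
    h.ps
  have hp := h.pos (X t₀) t₀ ht₀.le
  have hcp := soundP_pos h.hK h.hγ hp
  have h2 := h.pτ X _ t₀ ht₀ hX.self_of_nhds
  have h3 : HasDerivAt (fun t => soundP K₁ γ (τ (X t) t)) _ t₀ :=
    HasDerivAt.comp (h₂ := soundP K₁ γ) t₀ (hasDerivAt_soundP hp) h2
  have h4 := (h3.sqrt hcp.ne').mul h1
  refine h4.congr_deriv ?_
  unfold yP
  set c := soundP K₁ γ (τ (X t₀) t₀)
  have hq : 0 < Real.sqrt c := Real.sqrt_pos.2 hcp
  have hqq : c = Real.sqrt c ^ 2 := (Real.sq_sqrt hcp.le).symm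
  set q := Real.sqrt c
  rw [hqq]
  field_simp
  ring

lemma PS.y_char (h : PS K₁ γ τ u τx ux) (C : ℝ)
    (hC : ∀ x t, 0 ≤ t → soundP K₁ γ (τ x t) ≤ C) (x₀ t₀ T : ℝ) (ht₀ : t₀ ∈ Icc 0 T) :
    ∃ X : ℝ → ℝ, X t₀ = x₀ ∧ ContinuousOn (fun t => yP K₁ γ τ τx ux (X t) t) (Icc 0 T) ∧
      ∀ t ∈ Ioo 0 T, HasDerivAt (fun t => yP K₁ γ τ τx ux (X t) t)
      (-((γ + 1) / (4 * (τ (X t) t * Real.sqrt (soundP K₁ γ (τ (X t) t))))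
        * yP K₁ γ τ τx ux (X t) t ^ 2)) t := by
  obtain ⟨X, h0, h1, h2⟩ := exists_char (fun x t => soundP K₁ γ (τ x t)) _ C T t₀ x₀ ht₀ h.cc h.ccx h.dc
    (fun x t ht => by
      rw [abs_of_pos (soundP_pos h.hK h.hγ (h.pos x t ht))]; exact hC x t ht)
  refine ⟨X, h0, ?_, ?_⟩
  · exact ContinuousOn.comp (g := fun p : ℝ × ℝ => yP K₁ γ τ τx ux p.1 p.2)
      (f := fun t => (X t, t)) h.y_cont (h1.prodMk continuousOn_id) (fun t ht => mem_UHP.2 ht.1)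
  · intro t ht
    refine h.y_deriv X t ht.1 ?_
    filter_upwards [Ioo_mem_nhds ht.1 ht.2] with t' ht' using h2 t' ht'

lemma PS.coef_nonneg (h : PS K₁ γ τ u τx ux) (x t : ℝ) (ht : 0 ≤ t) :
    0 < (γ + 1) / (4 * (τ x t * Real.sqrt (soundP K₁ γ (τ x t)))) := by
  have := h.pos x t ht
  have := Real.sqrt_pos.2 (soundP_pos h.hK h.hγ (h.pos x t ht))
  have := h.hγ
  have : 0 < γ + 1 := by linarith
  positivity

lemma anti_of_hasDeriv {f f' : ℝ → ℝ} {T : ℝ} (hc : ContinuousOn f (Icc 0 T))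
    (hd : ∀ t ∈ Ioo 0 T, HasDerivAt f (f' t) t) (hn : ∀ t ∈ Ioo 0 T, f' t ≤ 0) :
    AntitoneOn f (Icc 0 T) := by
  refine antitoneOn_of_deriv_nonpos (convex_Icc 0 T) hc ?_ ?_
  · rw [interior_Icc]
    exact fun t ht => (hd t ht).differentiableAt.differentiableWithinAt
  · rw [interior_Icc]
    intro t ht
    rw [(hd t ht).deriv]
    exact hn t ht

lemma PS.y_bound (h : PS K₁ γ τ u τx ux) (C Y : ℝ)
    (hC : ∀ x t, 0 ≤ t → soundP K₁ γ (τ x t) ≤ C)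
    (hY : ∀ x, yP K₁ γ τ τx ux x 0 ≤ Y) (x t : ℝ) (ht : 0 ≤ t) :
    yP K₁ γ τ τx ux x t ≤ Y := by
  obtain ⟨X, h0, h1, h2⟩ := h.y_char C hC x t t ⟨ht, le_rfl⟩
  have h3 := anti_of_hasDeriv h1 h2 (fun s hs => by
    have := h.coef_nonneg (X s) s hs.1.le
    have := mul_nonneg this.le (sq_nonneg (yP K₁ γ τ τx ux (X s) s))
    linarith)
  have h4 := h3 ⟨le_rfl, ht⟩ ⟨ht, le_rfl⟩ ht
  simp only [h0] at h4
  exact h4.trans (hY _)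

lemma PS.growth (h : PS K₁ γ τ u τx ux) (m M Y : ℝ) (hm : 0 < m)
    (hmτ : ∀ x t, 0 ≤ t → m ≤ τ x t) (hM : ∀ x, τ x 0 ≤ M) (hY0 : 0 ≤ Y)
    (hY : ∀ x t, 0 ≤ t → Real.sqrt (soundP K₁ γ (τ x t)) * ux x t ≤ Y) :
    ∃ A B : ℝ, 0 < A ∧ 0 < B ∧ ∀ x t, 0 ≤ t → τ x t ^ ((3 - γ) / 4) ≤ A + B * t := by
  have hMpos : 0 < M := (h.pos 0 0 le_rfl).trans_le (hM 0)
  rcases le_or_gt ((3 - γ) / 4) 0 with hβ | hβ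
  · refine ⟨m ^ ((3 - γ) / 4), 1, by positivity, one_pos, fun x t ht => ?_⟩
    have := Real.rpow_le_rpow_of_nonpos hm (hmτ x t ht) hβ
    linarith
  · set k := Real.sqrt (Real.sqrt (K₁ * γ)) with hk
    have hkpos : 0 < k := by
      have : 0 < K₁ * γ := mul_pos h.hK (by linarith [h.hγ])
      positivity
    refine ⟨M ^ ((3 - γ) / 4), (3 - γ) / 4 * (Y / k) + 1, by positivity, by positivity, ?_⟩
    intro x t ht
    have hd : ∀ s ∈ Ioo 0 t, HasDerivAt (fun s => τ x s ^ ((3 - γ) / 4) - ((3 - γ) / 4 * (Y / k) + 1) * s)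
        (ux x s * ((3 - γ) / 4) * τ x s ^ ((3 - γ) / 4 - 1) - ((3 - γ) / 4 * (Y / k) + 1) * 1) s := by
      intro s hs
      have h1 := h.pτ (fun _ => x) 0 s hs.1 (hasDerivAt_const s x)
      simp only [mul_zero, zero_add] at h1
      exact (h1.rpow_const (Or.inl (h.pos x s hs.1.le).ne')).sub ((hasDerivAt_id s).const_mul _)
    have hc : ContinuousOn (fun s => τ x s ^ ((3 - γ) / 4) - ((3 - γ) / 4 * (Y / k) + 1) * s) (Icc 0 t) := by
      have h1 : ContinuousOn (fun s => τ x s) (Icc 0 t) :=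
        ContinuousOn.comp (g := fun p : ℝ × ℝ => τ p.1 p.2) (f := fun t => (x, t)) h.cτ
          (by fun_prop) (fun s hs => mem_UHP.2 hs.1)
      exact (h1.rpow_const (fun s hs => Or.inl (h.pos x s hs.1).ne')).sub (by fun_prop)
    have h3 := anti_of_hasDeriv hc hd (fun s hs => by
      have h4 := hY x s hs.1.le
      rw [sqrt_soundP (h.pos x s hs.1.le), ← hk] at h4
      have e : (3 - γ) / 4 - 1 = -(γ + 1) / 4 := by ring
      rw [e]
      have h5 : τ x s ^ (-(γ + 1) / 4) * ux x s ≤ Y / k := by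
        rw [le_div_iff₀ hkpos]; linarith
      nlinarith)
    have h4 := h3 ⟨le_rfl, ht⟩ ⟨ht, le_rfl⟩ ht
    simp only [mul_zero, sub_zero] at h4
    have h5 : τ x 0 ^ ((3 - γ) / 4) ≤ M ^ ((3 - γ) / 4) :=
      Real.rpow_le_rpow (h.pos x 0 le_rfl).le (hM x) hβ.le
    linarith

lemma PS.no_global (h : PS K₁ γ τ u τx ux) (C A B x₀ : ℝ) (hA : 0 < A) (hB : 0 < B)
    (hC : ∀ x t, 0 ≤ t → soundP K₁ γ (τ x t) ≤ C)
    (hg : ∀ x t, 0 ≤ t → τ x t ^ ((3 - γ) / 4) ≤ A + B * t)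
    (hneg : yP K₁ γ τ τx ux x₀ 0 < 0) : False := by
  set k := Real.sqrt (Real.sqrt (K₁ * γ)) with hk
  have hkpos : 0 < k := by
    have : 0 < K₁ * γ := mul_pos h.hK (by linarith [h.hγ])
    positivity
  have hγ1 : 0 < γ + 1 := by linarith [h.hγ]
  set α := (γ + 1) / (4 * k) with hα
  have hαpos : 0 < α := by positivity
  set y₀ := yP K₁ γ τ τx ux x₀ 0 with hy₀
  -- choose the time
  obtain ⟨T, hT0, hT⟩ : ∃ T, 0 ≤ T ∧ 0 < y₀⁻¹ + α / B * (Real.log (A + B * T) - Real.log A) := by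
    have h1 : Tendsto (fun T : ℝ => Real.log (A + B * T)) atTop atTop :=
      Real.tendsto_log_atTop.comp
        (tendsto_atTop_add_const_left _ _ (tendsto_id.const_mul_atTop hB))
    have h2 := h1.eventually_gt_atTop (Real.log A + (-y₀⁻¹) / (α / B))
    obtain ⟨T, h3, h4⟩ := (h2.and (eventually_ge_atTop 0)).exists
    refine ⟨T, h4, ?_⟩
    have h5 : (-y₀⁻¹) / (α / B) < Real.log (A + B * T) - Real.log A := by linarith
    rw [div_lt_iff₀ (by positivity)] at h5
    linarith
  obtain ⟨X, h0, h1, h2⟩ := h.y_char C hC x₀ 0 T ⟨le_rfl, hT0⟩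
  set y : ℝ → ℝ := fun t => yP K₁ γ τ τx ux (X t) t with hy
  have hanti := anti_of_hasDeriv h1 h2 (fun s hs => by
    have := h.coef_nonneg (X s) s hs.1.le
    have := mul_nonneg this.le (sq_nonneg (yP K₁ γ τ τx ux (X s) s))
    linarith)
  have hyneg : ∀ t ∈ Icc 0 T, y t < 0 := by
    intro t ht
    have := hanti ⟨le_rfl, hT0⟩ ht ht.1
    have e0 : y 0 = y₀ := by simp only [hy, hy₀, h0]
    exact (this.trans_eq e0).trans_lt hneg
  have hlogpos : ∀ t, 0 ≤ t → 0 < A + B * t := fun t ht => by positivity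
  have hd : ∀ t ∈ Ioo 0 T, HasDerivAt (fun t => α / B * Real.log (A + B * t) - (y t)⁻¹)
      (α / (A + B * t) - (γ + 1) / (4 * (τ (X t) t * Real.sqrt (soundP K₁ γ (τ (X t) t))))) t := by
    intro t ht
    have hyn := (hyneg t ⟨ht.1.le, ht.2.le⟩).ne
    have e1 : HasDerivAt (fun t : ℝ => A + B * t) B t := by
      have := ((hasDerivAt_id t).const_mul B).const_add A
      exact this.congr_deriv (by simp)
    have e2 := (e1.log (hlogpos t ht.1.le).ne').const_mul (α / B)
    have e3 := (h2 t ht).inv hyn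
    refine (e2.sub e3).congr_deriv ?_
    have hp := hlogpos t ht.1.le
    change α / B * (B / (A + B * t)) - - -(_ * y t ^ 2) / y t ^ 2 = _
    rw [neg_neg, mul_div_assoc, div_self (pow_ne_zero 2 hyn), mul_one]
    congr 1
    field_simp
  have hc : ContinuousOn (fun t => α / B * Real.log (A + B * t) - (y t)⁻¹) (Icc 0 T) := by
    refine ContinuousOn.sub (ContinuousOn.mul continuousOn_const ?_) ?_
    · exact ContinuousOn.log (by fun_prop) (fun t ht => (hlogpos t ht.1).ne')
    · exact h1.inv₀ (fun t ht => (hyneg t ht).ne)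
  have hfin := anti_of_hasDeriv hc hd (fun t ht => by
    have hp := h.pos (X t) t ht.1.le
    have e : τ (X t) t * Real.sqrt (soundP K₁ γ (τ (X t) t)) = k * τ (X t) t ^ ((3 - γ) / 4) := by
      rw [sqrt_soundP hp, ← hk]
      have : (3 - γ) / 4 = 1 + -(γ + 1) / 4 := by ring
      rw [this, Real.rpow_add hp, Real.rpow_one]
      ring
    rw [e, sub_nonpos, hα, div_div]
    have := hg (X t) t ht.1.le
    have h7 : 0 < τ (X t) t ^ ((3 - γ) / 4) := by positivity
    apply div_le_div_of_nonneg_left hγ1.le (by positivity)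
    nlinarith)
  have h8 := hfin ⟨le_rfl, hT0⟩ ⟨hT0, le_rfl⟩ hT0
  have h9 : y 0 = y₀ := by simp only [hy, hy₀, h0]
  have h10 := hyneg T ⟨hT0, le_rfl⟩
  simp only [h9, mul_zero, add_zero] at h8
  have h11 : (y T)⁻¹ < 0 := inv_lt_zero.2 h10
  linarith

lemma PS.main (h : PS K₁ γ τ u τx ux) (M₁ M₂ x₀ : ℝ) (hM₂ : 0 < M₂)
    (hb : ∀ x, |τ x 0| + |τx x 0| + |u x 0| + |ux x 0| ≤ M₁) (hl : ∀ x, M₂ ≤ τ x 0)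
    (hneg : ux x₀ 0 - soundP K₁ γ (τ x₀ 0) * τx x₀ 0 < 0) : False := by
  set S := M₁ + etaP K₁ γ M₂ with hS
  obtain ⟨m, hm, hmB⟩ := etaP_lower h.hK h.hγ (S + 1)
  have hη : ∀ x t, 0 ≤ t → etaP K₁ γ (τ x t) ≤ S + 1 := by
    intro x t ht
    refine h.bound S (soundP K₁ γ m) (soundP_pos h.hK h.hγ hm).le
      (fun y hy hyS => soundP_anti h.hγ hm (hmB y hy hyS)) ?_ ?_ x t ht
    all_goals
      intro x
      have h1 := etaP_anti (K₁ := K₁) h.hγ hM₂ (hl x)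
      have h2 := hb x
      have h3 := abs_le.1 (le_refl |u x 0|)
      have h4 := abs_nonneg (τ x 0)
      have h5 := abs_nonneg (τx x 0)
      have h6 := abs_nonneg (ux x 0)
      linarith [h3.1, h3.2]
  have hmτ : ∀ x t, 0 ≤ t → m ≤ τ x t := fun x t ht => hmB _ (h.pos x t ht) (hη x t ht)
  have hC : ∀ x t, 0 ≤ t → soundP K₁ γ (τ x t) ≤ soundP K₁ γ m :=
    fun x t ht => soundP_anti h.hγ hm (hmτ x t ht)
  have hM1 : 0 ≤ M₁ := le_trans (by positivity) (hb 0)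
  set c₂ := soundP K₁ γ M₂ with hc₂
  have hc₂pos : 0 < c₂ := soundP_pos h.hK h.hγ hM₂
  set Y := Real.sqrt c₂ * (M₁ + c₂ * M₁) with hYdef
  have hY0 : 0 ≤ Y := by positivity
  have key : ∀ a b c : ℝ, 0 < c → c ≤ c₂ → |a| ≤ M₁ → |b| ≤ M₁ → Real.sqrt c * (a - c * b) ≤ Y := by
    intro a b c hc hcc ha hbb
    have h1 : Real.sqrt c ≤ Real.sqrt c₂ := Real.sqrt_le_sqrt hcc
    have h2 : a - c * b ≤ M₁ + c₂ * M₁ := by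
      have h3 : a ≤ M₁ := (le_abs_self a).trans ha
      have h4 : -b ≤ M₁ := (neg_le_abs b).trans hbb
      nlinarith
    calc Real.sqrt c * (a - c * b) ≤ Real.sqrt c * (M₁ + c₂ * M₁) :=
          mul_le_mul_of_nonneg_left h2 (Real.sqrt_nonneg _)
      _ ≤ Y := mul_le_mul_of_nonneg_right h1 (by positivity)
  have hax : ∀ x, |ux x 0| ≤ M₁ := fun x => by
    have := hb x
    linarith [abs_nonneg (τ x 0), abs_nonneg (τx x 0), abs_nonneg (u x 0)]
  have hbx : ∀ x, |τx x 0| ≤ M₁ := fun x => by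
    have := hb x
    linarith [abs_nonneg (τ x 0), abs_nonneg (ux x 0), abs_nonneg (u x 0)]
  have hcx : ∀ x, soundP K₁ γ (τ x 0) ≤ c₂ := fun x => soundP_anti h.hγ hM₂ (hl x)
  have hcp : ∀ x, 0 < soundP K₁ γ (τ x 0) := fun x => soundP_pos h.hK h.hγ (h.pos x 0 le_rfl)
  have y1 := h.y_bound (soundP K₁ γ m) Y hC (fun x => key _ _ _ (hcp x) (hcx x) (hax x) (hbx x))
  have y2 := h.reflect.y_bound (soundP K₁ γ m) Y (fun x t ht => hC (-x) t ht)
    (fun x => key _ _ _ (hcp (-x)) (hcx (-x)) (hax (-x)) (by rw [abs_neg]; exact hbx (-x)))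
  obtain ⟨A, B, hA, hB, hg⟩ := h.growth m M₁ Y hm hmτ (fun x => by
      have := hb x
      linarith [le_abs_self (τ x 0), abs_nonneg (τx x 0), abs_nonneg (ux x 0), abs_nonneg (u x 0)])
    hY0 (fun x t ht => by
      have h1 := y1 x t ht
      have h2 := y2 (-x) t ht
      unfold yP at h1 h2
      simp only [neg_neg] at h2
      linarith)
  refine h.no_global (soundP K₁ γ m) A B x₀ hA hB hC hg ?_
  exact mul_neg_of_pos_of_neg (Real.sqrt_pos.2 (hcp x₀)) hneg
end

/-- Theorem 2.2 (necessity): for `γ > 1` and initial data satisfying Assumption A, if the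
initial data are compressive somewhere (`s_x(x*,0) < 0` or `r_x(x*,0) < 0`), then the
gradients blow up in finite time: there is no global-in-time `C¹` solution of the
p-system on `ℝ × [0,∞)` with this initial data. -/
theorem psystem_blowup_of_initial_compression
    (K₁ γ M₁ M₂ : ℝ) (hK₁ : 0 < K₁) (hγ : 1 < γ)
    (τ₀ u₀ : ℝ → ℝ) (hA : AssumptionA M₁ M₂ τ₀ u₀)
    (hcomp : ∃ xstar : ℝ,
      deriv (fun x => u₀ x + etaP K₁ γ (τ₀ x)) xstar < 0 ∨
      deriv (fun x => u₀ x - etaP K₁ γ (τ₀ x)) xstar < 0) :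
    ¬ ∃ τ u : ℝ → ℝ → ℝ,
        PSysSol K₁ γ (Set.Ici 0) 1 τ u ∧ (∀ x, τ x 0 = τ₀ x) ∧ (∀ x, u x 0 = u₀ x) := by
  rintro ⟨τ, u, hsol, hτ0, hu0⟩
  obtain ⟨τx, ux, h⟩ := PS.of_sol hK₁ hγ hsol
  obtain ⟨-, -, -, hM₂, hb, hl⟩ := hA
  have hτ0' : (fun x => τ x 0) = τ₀ := funext hτ0
  have hu0' : (fun x => u x 0) = u₀ := funext hu0
  have dτ0 : ∀ x, HasDerivAt τ₀ (τx x 0) x := fun x => by rw [← hτ0']; exact h.dτ x 0 le_rfl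
  have du0 : ∀ x, HasDerivAt u₀ (ux x 0) x := fun x => by rw [← hu0']; exact h.du x 0 le_rfl
  have dη0 : ∀ x, HasDerivAt (fun x => etaP K₁ γ (τ₀ x)) (-soundP K₁ γ (τ x 0) * τx x 0) x :=
    fun x => by
      have := h.dη x 0 le_rfl
      simpa only [hτ0] using this
  have hb' : ∀ x, |τ x 0| + |τx x 0| + |u x 0| + |ux x 0| ≤ M₁ := fun x => by
    rw [hτ0, hu0, ← (dτ0 x).deriv, ← (du0 x).deriv]; exact hb x
  have hl' : ∀ x, M₂ ≤ τ x 0 := fun x => by rw [hτ0]; exact hl x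
  obtain ⟨xs, hx | hx⟩ := hcomp
  · have e : deriv (fun x => u₀ x + etaP K₁ γ (τ₀ x)) xs = _ := ((du0 xs).add (dη0 xs)).deriv
    rw [e] at hx
    exact h.main M₁ M₂ xs hM₂ hb' hl' (by linarith)
  · have e : deriv (fun x => u₀ x - etaP K₁ γ (τ₀ x)) xs = _ := ((du0 xs).sub (dη0 xs)).deriv
    rw [e] at hx
    refine h.reflect.main M₁ M₂ (-xs) hM₂ (fun x => ?_) (fun x => hl' (-x)) ?_
    · simp only [abs_neg]; exact hb' (-x)
    · simp only [neg_neg]; linarith
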